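/- For each integer i ≥ 2, let a_i : (0, 1/4) → ℝ be the function a_i(z) = ∑_{n=0}^{∞} c(n, n+2−i)·z^n (with the coefficient taken to be 0 when i > n+2); this series converges for 0 < z < 1/4. Then as z → 1/4 from the left, (1−4z)^{(2i−3)/2}·a_i(z) tends to Catalan(i−2)/2^{3i−5}, where Catalan(k) denotes the k-th Catalan number. -/

import Mathlib

/-!
Put `m = i - 1` and let `b m n = c n (n + 1 - m)`: the index `m` is the *deficit*, the amount by
which the number of holes falls short of its maximum `n + 1`. With `A m = ∑ b m n Xⁿ`, so that the
series of the theorem is `A (i - 1)`, the recurrence for `c` becomes (`A_eq`)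

  `A m = [m = 0] + X (∑_{r + s = m - 1} L r s + ∑_{p + q = m} A p * A q)`,

where `L r s = ∑ (n + 1 - s choose r) b s n Xⁿ` comes from a λ binding `r` holes.
Hence `A 0` is the Catalan series, and `D = (X * A 0)'` is the series of central binomial
coefficients and the inverse of `1 - 2 X A 0`. Solving for `A m` when `m ≥ 1` gives (`A_one_eq`,
`A_add_two_eq`)

  `A m = D * X * (∑_{r + s = m - 1} L r s + ∑_{p + q = m, p, q ≥ 1} A p * A q)`.

Let `w z = √(1 - 4z)`, so that `D(z) = 1 / w z` and `z A₀(z) = (1 - w z) / 2` (`ev_base`). By strong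
induction (`asymp`), `w ^ (2m - 1) * A m` tends to `Kₘ = catalan (m - 1) / 2 ^ (3m - 2)`:
the convolution term has order exactly `w ^ (-(2m - 2))`, whereas the terms `L r s` are of strictly
smaller order (`tendsto_L`), which leaves `Kₘ = (1/4) ∑ K_p K_q`, the Catalan recurrence.
The estimate of `L r s` rests on the inequality
`(n + 1 choose r) zⁿ⁺¹ hʳ ≤ (z + h)ⁿ` for `z + h ≤ 1`: it gives
`z L_{r,s}(z) ≤ h⁻ʳ A_s(z + h)`, used with `z + h` the midpoint of `z` and `1/4`, so that `h = w(z + h)² / 4` (`taylor_bound`, `tendsto_taylor`).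
For `s = 0` this loses too much, `A 0` having singular exponent `+1/2` only after its constant
term, and `L r 0` is compared with `D` and `r - 1` instead.
Summability of each series on `(0, 1/4)` comes along in the same induction, all steps being sums
and Cauchy products of summable series.
-/

/-- `c n i` counts `i`-contexts (closed λ-terms with `i` holes) of size `n`. -/
def c : ℕ → ℕ → ℕ
  | 0, i => if i = 1 then 1 else 0
  | n+1, i => (∑ j ∈ Finset.Icc i (n+1), Nat.choose j i * c n j)
      + ∑ j ∈ Finset.range (i+1), ∑ k ∈ (Finset.range (n+1)).attach,
          c k.1 j * c (n - k.1) (i - j)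
termination_by n _ => n
decreasing_by
  · exact Nat.lt_succ_self n
  · exact Finset.mem_range.mp k.2
  · exact Nat.lt_succ_of_le (Nat.sub_le n k.1)

open Filter Set

section Helpers

open Finset.HasAntidiagonal (antidiagonal)

/-! ### The recurrence in terms of the deficit -/

/-- The number of contexts of size `n` and deficit `m`, i.e. with `n + 1 - m` holes; it is `0` when
`m > n + 1`. -/
def b (m n : ℕ) : ℕ := if m ≤ n + 1 then c n (n + 1 - m) else 0

lemma c_succ (n i : ℕ) : c (n + 1) i = (∑ j ∈ Finset.Icc i (n + 1), Nat.choose j i * c n j) +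
    ∑ p ∈ antidiagonal n, ∑ q ∈ antidiagonal i, c p.1 q.1 * c p.2 q.2 := by
  rw [c]
  congr 1
  rw [Finset.Nat.sum_antidiagonal_eq_sum_range_succ_mk]
  simp_rw [Finset.Nat.sum_antidiagonal_eq_sum_range_succ_mk]
  rw [Finset.sum_comm, ← Finset.sum_attach (Finset.range n.succ)]

/-- A context of size `n` has at most `n + 1` holes. -/
lemma c_eq_zero (n : ℕ) : ∀ i, n + 1 < i → c n i = 0 := by
  induction n using Nat.strong_induction_on with
  | _ n ih =>
    intro i hi
    cases n with
    | zero => rw [c, if_neg (by omega)]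
    | succ n =>
      rw [c_succ, Finset.Icc_eq_empty (by omega), Finset.sum_empty, zero_add]
      refine Finset.sum_eq_zero fun p hp => Finset.sum_eq_zero fun q hq => ?_
      rw [Finset.HasAntidiagonal.mem_antidiagonal] at hp hq
      rcases lt_or_ge (p.1 + 1) q.1 with h | h
      · rw [ih p.1 (by omega) _ h, zero_mul]
      · rw [ih p.2 (by omega) q.2 (by omega), mul_zero]

lemma b_zero (m : ℕ) : b m 0 = if m = 0 then 1 else 0 := by
  unfold b
  rw [c]
  split_ifs <;> omega

/-- Passing from hole numbers to deficits reverses the index ranges `[0, k + 1]` and `[0, l + 1]`,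
and so preserves the convolution over these indices. -/
lemma b_conv (k l i m : ℕ) (h : i + m = k + l + 2) :
    ∑ q ∈ antidiagonal i, c k q.1 * c l q.2 =
      ∑ p ∈ antidiagonal m, b p.1 k * b p.2 l := by
  have key : ∀ q : ℕ × ℕ, c k q.1 * c l q.2 ≠ 0 → q.1 ≤ k + 1 ∧ q.2 ≤ l + 1 := by
    intro q hq
    constructor <;> by_contra! hlt <;> apply hq
    · rw [c_eq_zero k _ hlt, zero_mul]
    · rw [c_eq_zero l _ hlt, mul_zero]
  have key' : ∀ q : ℕ × ℕ, b q.1 k * b q.2 l ≠ 0 → q.1 ≤ k + 1 ∧ q.2 ≤ l + 1 := by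
    intro q hq
    constructor <;> by_contra! hlt <;> apply hq
    · rw [b, if_neg (by omega), zero_mul]
    · rw [b, b, if_neg (by omega : ¬ q.2 ≤ l + 1), mul_zero]
  have val : ∀ q : ℕ × ℕ, q.1 ≤ k + 1 → q.2 ≤ l + 1 →
      b (k + 1 - q.1) k * b (l + 1 - q.2) l = c k q.1 * c l q.2 := by
    intro q h1 h2
    rw [b, b, if_pos (by omega), if_pos (by omega), Nat.sub_sub_self h1, Nat.sub_sub_self h2]
  refine Finset.sum_bij_ne_zero (fun q _ _ => (k + 1 - q.1, l + 1 - q.2)) ?_ ?_ ?_ ?_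
  · intro q hq h0
    have := key q h0
    simp only [Finset.HasAntidiagonal.mem_antidiagonal] at hq ⊢
    omega
  · intro q _ h0 q' _ h0' he
    have := key q h0
    have := key q' h0'
    simp only [Prod.mk.injEq] at he
    ext <;> omega
  · intro p hp h0
    have h1 := key' p h0
    rw [Finset.HasAntidiagonal.mem_antidiagonal] at hp
    refine ⟨(k + 1 - p.1, l + 1 - p.2), ?_, ?_, ?_⟩
    · simp only [Finset.HasAntidiagonal.mem_antidiagonal]
      omega
    · rw [b, b, if_pos h1.1, if_pos h1.2] at h0
      exact h0
    · ext <;> simp only <;> omega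
  · intro q _ h0
    have := key q h0
    exact (val q this.1 this.2).symm

/-- The recurrence for `c` in terms of the deficit. In the first sum `m - 1 - s` is the number of
holes bound by a λ whose body has deficit `s`; truncated subtractions do no harm, as `b s n = 0`
for `s > n + 1`. -/
lemma b_succ (m n : ℕ) : b m (n + 1) =
    (∑ s ∈ Finset.range m, (n + 1 - s).choose (m - 1 - s) * b s n) +
    ∑ p ∈ antidiagonal n, ∑ q ∈ antidiagonal m, b q.1 p.1 * b q.2 p.2 := by
  by_cases hm : m ≤ n + 2
  · rw [b, if_pos hm, c_succ]
    congr 1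
    · refine Finset.sum_nbij' (fun j => n + 1 - j) (fun s => n + 1 - s) ?_ ?_ ?_ ?_ ?_
      · intro j hj
        simp only [Finset.mem_Icc, Finset.mem_range] at hj ⊢
        omega
      · intro s hs
        simp only [Finset.mem_Icc, Finset.mem_range] at hs ⊢
        omega
      · intro j hj
        simp only [Finset.mem_Icc] at hj
        omega
      · intro s hs
        simp only [Finset.mem_range] at hs
        omega
      · intro j hj
        simp only [Finset.mem_Icc] at hj
        rw [b, if_pos (by omega), Nat.sub_sub_self hj.2, ← Nat.choose_symm hj.1]
        congr 2
        omega
    · refine Finset.sum_congr rfl fun p hp => b_conv _ _ _ _ ?_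
      rw [Finset.HasAntidiagonal.mem_antidiagonal] at hp
      omega
  · rw [b, if_neg (by omega), eq_comm, Nat.add_eq_zero_iff]
    constructor
    · refine Finset.sum_eq_zero fun s hs => ?_
      by_cases h : s ≤ n + 1
      · rw [Nat.choose_eq_zero_of_lt (by omega), zero_mul]
      · rw [b, if_neg h, mul_zero]
    · refine Finset.sum_eq_zero fun p hp => Finset.sum_eq_zero fun q hq => ?_
      rw [Finset.HasAntidiagonal.mem_antidiagonal] at hp hq
      rcases lt_or_ge (p.1 + 1) q.1 with h | h
      · rw [b, if_neg (by omega), zero_mul]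
      · rw [b, b, if_neg (by omega : ¬ q.2 ≤ p.2 + 1), mul_zero]

lemma b_zero_left (n : ℕ) : b 0 n = catalan n := by
  induction n using Nat.strong_induction_on with
  | _ n ih =>
    cases n with
    | zero => simp [b_zero]
    | succ n =>
      rw [b_succ, catalan_succ']
      simp only [Finset.range_zero, Finset.sum_empty, zero_add, Finset.Nat.antidiagonal_zero,
        Finset.sum_singleton]
      refine Finset.sum_congr rfl fun p hp => ?_
      rw [Finset.HasAntidiagonal.mem_antidiagonal] at hp
      rw [ih p.1 (by omega), ih p.2 (by omega)]

open PowerSeries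

/-! ### Generating functions -/

/-- The generating function of contexts of deficit `m`, by size. -/
noncomputable def A (m : ℕ) : ℝ⟦X⟧ := .mk fun n => (b m n : ℝ)

/-- The generating function of contexts of deficit `s` with `r` marked holes: the bodies of
λ-abstractions binding `r` holes. -/
noncomputable def L (r s : ℕ) : ℝ⟦X⟧ := .mk fun n => ((n + 1 - s).choose r * b s n : ℕ)

/-- The derivative of `X * A 0`. It is both the central binomial series (`coeff_D`) and the inverse
of `1 - 2 * (X * A 0)` (`D_mul`). -/
noncomputable def D : ℝ⟦X⟧ := derivative ℝ (X * A 0)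

lemma coeff_D (n : ℕ) : coeff n D = n.centralBinom := by
  rw [D, coeff_derivative, coeff_succ_X_mul, A, coeff_mk, b_zero_left,
    ← succ_mul_catalan_eq_centralBinom]
  push_cast
  ring

lemma A_eq (m : ℕ) : A m = (if m = 0 then 1 else 0) +
    X * (∑ s ∈ Finset.range m, L (m - 1 - s) s + ∑ q ∈ antidiagonal m, A q.1 * A q.2) := by
  ext n
  cases n with
  | zero =>
    rw [map_add, coeff_zero_X_mul, A, coeff_mk, b_zero]
    split_ifs <;> simp
  | succ n =>
    rw [map_add, coeff_succ_X_mul, A, coeff_mk, b_succ, map_add, map_sum, map_sum,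
      Finset.sum_comm]
    have h0 : coeff (n + 1) (if m = 0 then 1 else 0 : ℝ⟦X⟧) = 0 := by
      split_ifs <;> simp [coeff_one]
    rw [h0, zero_add]
    simp only [L, A, coeff_mk, coeff_mul]
    push_cast
    rfl

lemma A_zero_eq : A 0 = 1 + X * (A 0 * A 0) := by
  conv_lhs => rw [A_eq]
  simp

/-- Differentiating `F = X + F ^ 2` for `F = X * A 0` gives `F' * (1 - 2 * F) = 1`. -/
lemma D_mul : D * (1 - 2 * (X * A 0)) = 1 := by
  have h : X * A 0 = X + (X * A 0) * (X * A 0) := by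
    conv_lhs => rw [A_zero_eq]
    ring
  have h2 := congrArg (derivative ℝ) h
  rw [map_add, derivative_X, Derivation.leibniz (derivative ℝ) (X * A 0) (X * A 0)] at h2
  simp only [smul_eq_mul] at h2
  rw [← D] at h2
  linear_combination h2

lemma sq_eq : (1 - 2 * (X * A 0)) * (1 - 2 * (X * A 0)) = 1 - 4 * X := by
  linear_combination 4 * X * A_zero_eq.symm

lemma A_one_eq : A 1 = D * (X * A 0) := by
  have h := A_eq 1
  have hL : L 0 0 = A 0 := by ext n; simp [L, A]
  rw [Finset.Nat.sum_antidiagonal_succ] at h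
  simp [hL] at h
  linear_combination D * h - A 1 * D_mul

lemma A_add_two_eq (k : ℕ) : A (k + 2) = D * (X * (∑ s ∈ Finset.range (k + 2), L (k + 1 - s) s +
    ∑ q ∈ antidiagonal k, A (q.1 + 1) * A (q.2 + 1))) := by
  have h := A_eq (k + 2)
  rw [Finset.Nat.sum_antidiagonal_succ, Finset.Nat.sum_antidiagonal_succ'] at h
  simp only [Nat.add_eq_zero_iff, OfNat.ofNat_ne_zero, and_false, if_false, zero_add] at h
  rw [show k + 2 - 1 = k + 1 from rfl] at h
  linear_combination D * h - A (k + 2) * D_mul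

/-! ### Evaluation of power series -/

/-- The series `f` converges at `z` (over `ℝ`, summability is absolute convergence). -/
def Sm (f : ℝ⟦X⟧) (z : ℝ) : Prop := Summable fun n => coeff n f * z ^ n

/-- The value of `f` at `z`; it is the junk value `0` unless `Sm f z`. -/
noncomputable def ev (f : ℝ⟦X⟧) (z : ℝ) : ℝ := ∑' n, coeff n f * z ^ n

lemma Sm.add {f g : ℝ⟦X⟧} {z : ℝ} (hf : Sm f z) (hg : Sm g z) :
    Sm (f + g) z ∧ ev (f + g) z = ev f z + ev g z := by
  have h := HasSum.add hf.hasSum hg.hasSum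
  simp only [← add_mul, ← map_add] at h
  exact ⟨h.summable, h.tsum_eq⟩

lemma Sm.sum {ι : Type*} {s : Finset ι} {f : ι → ℝ⟦X⟧} {z : ℝ} (hf : ∀ i ∈ s, Sm (f i) z) :
    Sm (∑ i ∈ s, f i) z ∧ ev (∑ i ∈ s, f i) z = ∑ i ∈ s, ev (f i) z := by
  have h := hasSum_sum fun i hi => (hf i hi).hasSum
  simp only [← Finset.sum_mul, ← map_sum] at h
  exact ⟨h.summable, h.tsum_eq⟩

lemma Sm.mul {f g : ℝ⟦X⟧} {z : ℝ} (hf : Sm f z) (hg : Sm g z) :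
    Sm (f * g) z ∧ ev (f * g) z = ev f z * ev g z := by
  have key : ∀ n, coeff n (f * g) * z ^ n =
      ∑ p ∈ antidiagonal n, (coeff p.1 f * z ^ p.1) * (coeff p.2 g * z ^ p.2) := by
    intro n
    rw [coeff_mul, Finset.sum_mul]
    refine Finset.sum_congr rfl fun p hp => ?_
    rw [Finset.HasAntidiagonal.mem_antidiagonal] at hp
    rw [← hp, pow_add]
    ring
  unfold Sm ev
  simp only [key]
  exact ⟨(summable_norm_sum_mul_antidiagonal_of_summable_norm hf.norm hg.norm).of_norm,
    (tsum_mul_tsum_eq_tsum_sum_antidiagonal_of_summable_norm hf.norm hg.norm).symm⟩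

lemma sm_poly (P : Polynomial ℝ) (z : ℝ) : Sm (P : ℝ⟦X⟧) z ∧ ev (P : ℝ⟦X⟧) z = P.eval z := by
  have h : HasSum (fun n => coeff n (P : ℝ⟦X⟧) * z ^ n) (P.eval z) := by
    rw [Polynomial.eval_eq_sum, Polynomial.sum_def]
    simp only [Polynomial.coeff_coe]
    refine hasSum_sum_of_ne_finset_zero fun n hn => ?_
    rw [Polynomial.notMem_support_iff.mp hn, zero_mul]
  exact ⟨h.summable, h.tsum_eq⟩

lemma sm_X (z : ℝ) : Sm X z ∧ ev X z = z := by simpa using sm_poly .X z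

lemma sm_C (a z : ℝ) : Sm (C a) z ∧ ev (C a) z = a := by simpa using sm_poly (.C a) z

lemma sm_D {z : ℝ} (hz : z ∈ Ioo (0 : ℝ) (1 / 4)) : Sm D z := by
  have h0 := hz.1
  refine Summable.of_nonneg_of_le (f := fun n => (4 * z) ^ n) (fun n => ?_) (fun n => ?_)
    (summable_geometric_of_lt_one (by linarith) (by linarith [hz.2]))
  · rw [coeff_D]
    positivity
  · rw [coeff_D, mul_pow]
    gcongr
    have := Nat.choose_le_two_pow (2 * n) n
    rw [pow_mul] at this
    exact_mod_cast this

lemma sm_A_zero {z : ℝ} (hz : z ∈ Ioo (0 : ℝ) (1 / 4)) : Sm (A 0) z := by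
  have h0 := hz.1
  refine Summable.of_nonneg_of_le (fun n => ?_) (fun n => ?_) (sm_D hz)
  · rw [A, coeff_mk]
    positivity
  · rw [coeff_D, A, coeff_mk, b_zero_left, ← succ_mul_catalan_eq_centralBinom]
    gcongr
    nlinarith

/-- The function `√(1 - 4z)`, the natural scale at the singularity `1/4`. -/
noncomputable def w (z : ℝ) : ℝ := √(1 - 4 * z)

lemma w_pos {z : ℝ} (hz : z ∈ Ioo (0 : ℝ) (1 / 4)) : 0 < w z :=
  Real.sqrt_pos.mpr (by linarith [hz.2])

lemma w_sq {z : ℝ} (hz : z ∈ Ioo (0 : ℝ) (1 / 4)) : w z ^ 2 = 1 - 4 * z :=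
  Real.sq_sqrt (by linarith [hz.2])

/-- Evaluating `(1 - 2 X A 0) ^ 2 = 1 - 4 X` determines `1 - 2 z A₀(z)` up to sign, and
`D * (1 - 2 X A 0) = 1` with `D(z) ≥ 0` fixes the sign. -/
lemma ev_base {z : ℝ} (hz : z ∈ Ioo (0 : ℝ) (1 / 4)) :
    z * ev (A 0) z = (1 - w z) / 2 ∧ w z * ev D z = 1 := by
  have hX := (sm_X z).1.mul (sm_A_zero hz)
  have hX' := (sm_C (-2) z).1.mul hX.1
  have hU := (sm_C 1 z).1.add hX'.1
  have hDU := (sm_D hz).mul hU.1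
  have hUU := hU.1.mul hU.1
  have hR := (sm_C (-4) z).1.mul (sm_X z).1
  have hR' := (sm_C 1 z).1.add hR.1
  have eU : (C 1 + C (-2) * (X * A 0) : ℝ⟦X⟧) = 1 - 2 * (X * A 0) := by
    rw [map_neg, map_ofNat, map_one]
    ring
  have eR : (C 1 + C (-4) * X : ℝ⟦X⟧) = 1 - 4 * X := by
    rw [map_neg, map_ofNat, map_one]
    ring
  have evU : ev (C 1 + C (-2) * (X * A 0)) z = 1 - 2 * (z * ev (A 0) z) := by
    rw [hU.2, hX'.2, hX.2, (sm_C _ z).2, (sm_C _ z).2, (sm_X z).2]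
    ring
  have e1 : ev D z * (1 - 2 * (z * ev (A 0) z)) = 1 := by
    rw [← evU, ← hDU.2, eU, D_mul]
    simpa using (sm_C 1 z).2
  have e2 : (1 - 2 * (z * ev (A 0) z)) ^ 2 = 1 - 4 * z := by
    rw [← evU, sq, ← hUU.2, eU, sq_eq, ← eR, hR'.2, hR.2, (sm_C _ z).2, (sm_C _ z).2, (sm_X z).2]
    ring
  have hD0 : 0 ≤ ev D z := tsum_nonneg fun n => by
    have := hz.1
    rw [coeff_D]
    positivity
  have e3 : 1 - 2 * (z * ev (A 0) z) = w z := by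
    rw [w, ← e2, Real.sqrt_sq]
    by_contra! hlt
    nlinarith
  exact ⟨by linarith, by rw [← e3, mul_comm, e1]⟩

/-! ### Asymptotics at `1/4` -/

/-- A substitute for Cauchy's estimate: for a power series with nonnegative coefficients, taking
`r`-th derivatives costs at most a factor `h⁻ʳ` and a shift of the argument by `h`. -/
lemma taylor_bound {f g : ℝ⟦X⟧} {r : ℕ} (hg : ∀ n, 0 ≤ coeff n g)
    (hfg : ∀ n, coeff n g ≤ (n + 1).choose r * coeff n f) (hf : ∀ n, 0 ≤ coeff n f)
    {z h : ℝ} (hz : 0 < z) (hh : 0 < h) (hzh : z + h ≤ 1) (hs : Sm f (z + h)) :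
    Sm g z ∧ 0 ≤ z * ev g z ∧ z * ev g z ≤ (h⁻¹) ^ r * ev f (z + h) := by
  have choose_bound : ∀ n : ℕ, ((n + 1).choose r : ℝ) * z ^ (n + 1) ≤ h⁻¹ ^ r * (z + h) ^ n := by
    intro n
    rw [inv_pow, inv_mul_eq_div, le_div_iff₀ (by positivity)]
    rcases lt_or_ge (n + 1) r with hlt | hle
    · rw [Nat.choose_eq_zero_of_lt hlt]
      simp only [Nat.cast_zero, zero_mul]
      positivity
    · calc ((n + 1).choose r : ℝ) * z ^ (n + 1) * h ^ r
          ≤ (n + 1).choose r * z ^ (n + 1 - r) * h ^ r := by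
            have := pow_le_pow_of_le_one hz.le (by linarith) (Nat.sub_le (n + 1) r)
            gcongr
        _ = h ^ r * z ^ (n + 1 - r) * (n + 1).choose r := by ring
        _ ≤ (h + z) ^ (n + 1) := by
            rw [add_pow]
            exact Finset.single_le_sum
              (f := fun m => h ^ m * z ^ (n + 1 - m) * ((n + 1).choose m : ℝ))
              (fun _ _ => by positivity) (Finset.mem_range.mpr (by omega))
        _ ≤ (z + h) ^ n := by
            rw [add_comm h z]
            exact pow_le_pow_of_le_one (by positivity) hzh (by omega)
  have term : ∀ n, z * (coeff n g * z ^ n) ≤ h⁻¹ ^ r * (coeff n f * (z + h) ^ n) := by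
    intro n
    calc z * (coeff n g * z ^ n) = coeff n g * z ^ (n + 1) := by ring
      _ ≤ (n + 1).choose r * coeff n f * z ^ (n + 1) := by
          gcongr
          exact hfg n
      _ = coeff n f * ((n + 1).choose r * z ^ (n + 1)) := by ring
      _ ≤ coeff n f * (h⁻¹ ^ r * (z + h) ^ n) :=
          mul_le_mul_of_nonneg_left (choose_bound n) (hf n)
      _ = _ := by ring
  have nn : ∀ n, 0 ≤ coeff n g * z ^ n := fun n => mul_nonneg (hg n) (by positivity)
  have hs' := hs.mul_left (h⁻¹ ^ r)
  have hsz : Summable fun n => z * (coeff n g * z ^ n) :=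
    Summable.of_nonneg_of_le (fun n => mul_nonneg hz.le (nn n)) term hs'
  refine ⟨(summable_mul_left_iff hz.ne').mp hsz, mul_nonneg hz.le (tsum_nonneg nn), ?_⟩
  rw [ev, ev, ← tsum_mul_left, ← tsum_mul_left]
  exact hsz.tsum_le_tsum term hs'

/-- The filter `z → 1/4` from the left, within `(0, 1/4)`. -/
noncomputable def nearQuarter : Filter ℝ := nhdsWithin (1 / 4) (Ioo (0 : ℝ) (1 / 4))

lemma eventually_mem_Ioo : ∀ᶠ z in nearQuarter, z ∈ Ioo (0 : ℝ) (1 / 4) := self_mem_nhdsWithin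

lemma tendsto_near : Tendsto (fun z : ℝ => z) nearQuarter (nhds (1 / 4)) :=
  tendsto_nhdsWithin_of_tendsto_nhds tendsto_id

lemma tendsto_w : Tendsto w nearQuarter (nhds 0) := by
  have h : Continuous w := by unfold w; fun_prop
  have h1 := (h.tendsto (1 / 4)).comp tendsto_near
  have h2 : w (1 / 4) = 0 := by norm_num [w]
  rwa [h2] at h1

lemma mid_mem {z : ℝ} (hz : z ∈ Ioo (0 : ℝ) (1 / 4)) : z + (1 / 4 - z) / 2 ∈ Ioo (0 : ℝ) (1 / 4) :=
  ⟨by linarith [hz.1, hz.2], by linarith [hz.1, hz.2]⟩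

lemma tendsto_mid : Tendsto (fun z : ℝ => z + (1 / 4 - z) / 2) nearQuarter nearQuarter := by
  refine tendsto_nhdsWithin_iff.mpr ⟨?_, eventually_mem_Ioo.mono fun z hz => mid_mem hz⟩
  have := tendsto_near.add ((tendsto_near.const_sub (1 / 4)).div_const 2)
  simpa using this

/-- If `w ^ e * f` has a limit and the coefficients of `g` are at most `(n + 1 choose r)` times those of
`f`, then `z g(z) = O(w ^ (-2r - e))`, hence is `o(w ^ (-2r - e - 1))`. -/
lemma tendsto_taylor {f g : ℝ⟦X⟧} {r e : ℕ} {K : ℝ} (hg : ∀ n, 0 ≤ coeff n g)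
    (hfg : ∀ n, coeff n g ≤ (n + 1).choose r * coeff n f) (hf : ∀ n, 0 ≤ coeff n f)
    (hs : ∀ z ∈ Ioo (0 : ℝ) (1 / 4), Sm f z)
    (hK : Tendsto (fun z => w z ^ e * ev f z) nearQuarter (nhds K)) :
    (∀ z ∈ Ioo (0 : ℝ) (1 / 4), Sm g z) ∧
      Tendsto (fun z => w z ^ (2 * r + e + 1) * (z * ev g z)) nearQuarter (nhds 0) := by
  have key := fun z (hz : z ∈ Ioo (0 : ℝ) (1 / 4)) =>
    taylor_bound hg hfg hf hz.1 (h := (1 / 4 - z) / 2) (by linarith [hz.2])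
      (by linarith [hz.1, hz.2]) (hs _ (mid_mem hz))
  refine ⟨fun z hz => (key z hz).1, ?_⟩
  have up := ((tendsto_w.mul hK).comp tendsto_mid).const_mul (√2 ^ (2 * r + e + 1) * 4 ^ r)
  rw [zero_mul, mul_zero] at up
  refine squeeze_zero' (eventually_mem_Ioo.mono fun z hz => ?_)
    (eventually_mem_Ioo.mono fun z hz => ?_) up
  · exact mul_nonneg (pow_nonneg (w_pos hz).le _) (key z hz).2.1
  · have hy := mid_mem hz
    have hwy := w_pos hy
    have hle := (key z hz).2.2
    simp only [Function.comp]
    have hh : (1 / 4 - z) / 2 = w (z + (1 / 4 - z) / 2) ^ 2 / 4 := by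
      rw [w_sq hy]
      ring
    have hw : w z = √2 * w (z + (1 / 4 - z) / 2) := by
      rw [w, w, ← Real.sqrt_mul (by norm_num)]
      congr 1
      ring
    generalize z + (1 / 4 - z) / 2 = y at *
    rw [hh] at hle
    rw [hw]
    calc (√2 * w y) ^ (2 * r + e + 1) * (z * ev g z)
        ≤ (√2 * w y) ^ (2 * r + e + 1) * ((w y ^ 2 / 4)⁻¹ ^ r * ev f y) := by gcongr
      _ = √2 ^ (2 * r + e + 1) * 4 ^ r * (w y * (w y ^ e * ev f y)) := by
        rw [inv_div, div_pow, mul_pow, ← pow_mul, pow_succ (w y), pow_add (w y)]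
        field_simp

/-- Convergence and asymptotics of `A (k + 1)`, the series of the theorem for `i = k + 2`. -/
def Asymp (k : ℕ) : Prop :=
  (∀ z ∈ Ioo (0 : ℝ) (1 / 4), Sm (A (k + 1)) z) ∧
    Tendsto (fun z => w z ^ (2 * k + 1) * ev (A (k + 1)) z) nearQuarter
      (nhds ((catalan k : ℝ) / 2 ^ (3 * k + 1)))

/-- The abstraction terms are negligible: `w ^ (-(2k + 2))` is the order of the convolution term
in the recurrence for `A (k + 2)`. -/
lemma tendsto_L {k r s : ℕ} (hrs : r + s = k + 1) (ih : ∀ j < k + 1, Asymp j) :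
    (∀ z ∈ Ioo (0 : ℝ) (1 / 4), Sm (L r s) z) ∧
      Tendsto (fun z => w z ^ (2 * k + 2) * (z * ev (L r s) z)) nearQuarter (nhds 0) := by
  have hL : ∀ n, 0 ≤ coeff n (L r s) := fun n => by rw [L, coeff_mk]; positivity
  cases s with
  | zero =>
    obtain rfl : r = k + 1 := by omega
    -- One factor of the binomial turns `A 0` into `D`, whose singular exponent is `-1/2`:
    -- `(n + 1 choose k + 1) ≤ (n + 1) (n choose k)` and `(n + 1) catalan n = centralBinom n`.
    refine tendsto_taylor (r := k) (e := 1) (f := D) (K := 1) hL (fun n => ?_) (fun n => ?_)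
      (fun z hz => sm_D hz) ?_
    · rw [L, coeff_mk, coeff_D, b_zero_left, ← succ_mul_catalan_eq_centralBinom, Nat.sub_zero]
      norm_cast
      rw [← mul_assoc]
      gcongr
      calc (n + 1).choose (k + 1)
          ≤ (n + 1).choose (k + 1) * (k + 1) := Nat.le_mul_of_pos_right _ (by omega)
        _ = (n + 1) * n.choose k := (Nat.add_one_mul_choose_eq n k).symm
        _ ≤ (n + 1) * (n + 1).choose k := by
          gcongr
          omega
        _ = _ := mul_comm _ _
    · rw [coeff_D]
      positivity
    · refine tendsto_const_nhds.congr' (eventually_mem_Ioo.mono fun z hz => ?_)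
      simp only [pow_one, (ev_base hz).2]
  | succ s =>
    obtain ⟨hs, hK⟩ := ih s (by omega)
    have := tendsto_taylor (r := r) hL (fun n => ?_) (fun n => ?_) hs hK
    · rwa [show 2 * r + (2 * s + 1) + 1 = 2 * k + 2 by omega] at this
    · rw [L, A, coeff_mk, coeff_mk]
      push_cast
      gcongr
      omega
    · rw [A, coeff_mk]
      positivity

lemma asymp (k : ℕ) : Asymp k := by
  induction k using Nat.strong_induction_on with
  | _ k ih =>
    cases k with
    | zero =>
      have key := fun z (hz : z ∈ Ioo (0 : ℝ) (1 / 4)) =>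
        (sm_D hz).mul ((sm_X z).1.mul (sm_A_zero hz)).1
      have hA : A (0 + 1) = D * (X * A 0) := A_one_eq
      refine ⟨fun z hz => hA ▸ (key z hz).1, ?_⟩
      have h := (tendsto_w.const_sub 1).div_const 2
      simp only [catalan_zero]
      norm_num at h ⊢
      refine h.congr' (eventually_mem_Ioo.mono fun z hz => ?_)
      beta_reduce
      rw [A_one_eq, (key z hz).2, ((sm_X z).1.mul (sm_A_zero hz)).2, (sm_X z).2, (ev_base hz).1,
        ← mul_assoc, (ev_base hz).2, one_mul]
    | succ k =>
      have hL := fun s (hs : s ∈ Finset.range (k + 2)) =>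
        tendsto_L (k := k) (r := k + 1 - s) (s := s)
          (by have := Finset.mem_range.mp hs; omega) ih
      have hq : ∀ q ∈ antidiagonal k, Asymp q.1 ∧ Asymp q.2 := fun q hq => by
        rw [Finset.HasAntidiagonal.mem_antidiagonal] at hq
        exact ⟨ih _ (by omega), ih _ (by omega)⟩
      have S1 := fun z (hz : z ∈ Ioo (0 : ℝ) (1 / 4)) => Sm.sum fun s hs => (hL s hs).1 z hz
      have S2 := fun z (hz : z ∈ Ioo (0 : ℝ) (1 / 4)) => Sm.sum fun q h =>
        (((hq q h).1.1 z hz).mul ((hq q h).2.1 z hz)).1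
      have S3 := fun z hz => (S1 z hz).1.add (S2 z hz).1
      have S4 := fun z hz => (sm_X z).1.mul (S3 z hz).1
      have S5 := fun z hz => (sm_D hz).mul (S4 z hz).1
      have hA := A_add_two_eq k
      refine ⟨fun z hz => hA ▸ (S5 z hz).1, ?_⟩
      have T1 := tendsto_finsetSum (Finset.range (k + 2)) fun s hs => (hL s hs).2
      have T2 := tendsto_near.mul <| tendsto_finsetSum (antidiagonal k) fun q h =>
        (hq q h).1.2.mul (hq q h).2.2
      have T := T1.add T2
      have hval : (∑ _s ∈ Finset.range (k + 2), (0 : ℝ)) + 1 / 4 * ∑ q ∈ antidiagonal k,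
          (catalan q.1 : ℝ) / 2 ^ (3 * q.1 + 1) * (catalan q.2 / 2 ^ (3 * q.2 + 1)) =
          catalan (k + 1) / 2 ^ (3 * (k + 1) + 1) := by
        rw [Finset.sum_const_zero, zero_add, catalan_succ', Nat.cast_sum, Finset.sum_div,
          Finset.mul_sum]
        refine Finset.sum_congr rfl fun q h => ?_
        rw [Finset.HasAntidiagonal.mem_antidiagonal] at h
        rw [← h]
        push_cast
        field_simp
        ring
      rw [hval] at T
      refine T.congr' (eventually_mem_Ioo.mono fun z hz => ?_)
      beta_reduce
      rw [hA, (S5 z hz).2, (S4 z hz).2, (S3 z hz).2, (S1 z hz).2, (S2 z hz).2, (sm_X z).2]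
      have e1 : ∑ s ∈ Finset.range (k + 2), w z ^ (2 * k + 2) * (z * ev (L (k + 1 - s) s) z) =
          w z ^ (2 * k + 2) * (z * ∑ s ∈ Finset.range (k + 2), ev (L (k + 1 - s) s) z) := by
        rw [Finset.mul_sum, Finset.mul_sum]
      have e2 : ∑ q ∈ antidiagonal k, w z ^ (2 * q.1 + 1) * ev (A (q.1 + 1)) z *
            (w z ^ (2 * q.2 + 1) * ev (A (q.2 + 1)) z) =
          w z ^ (2 * k + 2) * ∑ q ∈ antidiagonal k, ev (A (q.1 + 1) * A (q.2 + 1)) z := by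
        rw [Finset.mul_sum]
        refine Finset.sum_congr rfl fun q h => ?_
        rw [(((hq q h).1.1 z hz).mul ((hq q h).2.1 z hz)).2]
        rw [Finset.HasAntidiagonal.mem_antidiagonal] at h
        rw [← h]
        ring
      rw [e1, e2]
      linear_combination (-(w z ^ (2 * k + 2)) * z *
        (∑ s ∈ Finset.range (k + 2), ev (L (k + 1 - s) s) z +
          ∑ q ∈ antidiagonal k, ev (A (q.1 + 1) * A (q.2 + 1)) z)) * (ev_base hz).2

end Helpers

/-- For `i ≥ 2`, the series `a_i(z) = ∑ c(n,n+2-i) zⁿ` converges on `(0, 1/4)` and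
`(1-4z)^((2i-3)/2) * a_i(z) → Catalan(i-2)/2^(3i-5)` as `z → 1/4⁻`. -/
theorem a_asymptotic (i : ℕ) (hi : 2 ≤ i) :
    (∀ z ∈ Set.Ioo (0:ℝ) (1/4),
      Summable fun n : ℕ => (if i ≤ n+2 then (c n (n+2-i) : ℝ) else 0) * z^n) ∧
    Tendsto
      (fun z : ℝ => (1 - 4*z) ^ ((2*(i:ℝ) - 3)/2)
        * ∑' n : ℕ, (if i ≤ n+2 then (c n (n+2-i) : ℝ) else 0) * z^n)
      (nhdsWithin (1/4) (Set.Ioo (0:ℝ) (1/4)))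
      (nhds ((catalan (i-2) : ℝ) / 2^(3*i-5))) := by
  obtain ⟨k, rfl⟩ : ∃ k, i = k + 2 := ⟨i - 2, by omega⟩
  obtain ⟨hs, hK⟩ := asymp k
  have hcoeff : ∀ n : ℕ, (if k + 2 ≤ n + 2 then (c n (n + 2 - (k + 2)) : ℝ) else 0) =
      PowerSeries.coeff n (A (k + 1)) := by
    intro n
    rw [A, PowerSeries.coeff_mk, b]
    by_cases h : k ≤ n
    · rw [if_pos (by omega), if_pos (by omega)]
      congr 2
      omega
    · rw [if_neg (by omega), if_neg (by omega), Nat.cast_zero]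
  simp only [hcoeff]
  refine ⟨hs, ?_⟩
  rw [show k + 2 - 2 = k by omega, show 3 * (k + 2) - 5 = 3 * k + 1 by omega]
  refine hK.congr' (eventually_mem_Ioo.mono fun z hz => ?_)
  have h0 : 0 ≤ 1 - 4 * z := by linarith [hz.2]
  rw [w, Real.sqrt_eq_rpow, ← Real.rpow_natCast, ← Real.rpow_mul h0, ev]
  congr 2
  push_cast
  ring
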